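/- arXiv:1610.06760 — 2 statements merged into one kernel-verified Lean document; each statement's English description precedes it below -/
import Mathlib

section
/- Let f(z) = z + Σ_{n≥2} a_n zⁿ be analytic and injective on the open unit disc 𝔻 with all Taylor coefficients a_n real, and let λ ≥ 1 be a real number. Then |λ a_2² − a_3| ≤ 4λ − 3. -/
/-!
Both `‖a₂² - a₃‖ ≤ 1` and `‖a₂‖ ≤ 2` are instances of the area theorem: if `z⁻¹ + h z` is injective
on the punctured unit disc, with `h` holomorphic on the disc, then `‖h' 0‖ ≤ 1`. One applies it to
`1 / (f z - f 0)`, and to the odd square root `1 / √(f (z²) - f 0)`. The theorem follows by writing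
`λ a₂² - a₃ = (a₂² - a₃) + (λ - 1) a₂²`.

The area theorem is obtained from the spherical metric of curvature `4κ`, which spares any
discussion of the topology of the image of `g z = z⁻¹ + h z`. The form `g̅ g' dz / (1 + κ |g|²)`
has as exterior derivative `2i` times the pull-back by `g` of the spherical area element, so its
mean flux through a circle increases with the radius, and for injective `g` the total increase is
at most `1 / κ`, the area `π / κ` of the sphere over `π`. The pole of `g` makes the flux tend to
`-1 / κ` at the origin, hence the flux is nonpositive on every circle. Letting `κ → 0`, the mean of
`Re (z g' g̅)` is nonpositive on every circle of radius `ρ < 1`. This mean is `-1 / ρ²` plus the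
flux of `h`, and the latter is at least `‖h' 0‖² ρ²`.
-/

open Complex Filter MeasureTheory Metric Set Topology
open Real (circleAverage)
open scoped ComplexConjugate Interval Real

/-- The pull-back by `g` of the area density `1 / (1 + κ |w|²)²` of the sphere of curvature `4κ`, in
the stereographic coordinate `w`. For `κ = 0` this is the Euclidean area density. -/
noncomputable def sphericalDensity (κ : ℝ) (g : ℂ → ℂ) (z : ℂ) : ℝ :=
  ‖deriv g z‖ ^ 2 / (1 + κ * ‖g z‖ ^ 2) ^ 2

/-- The coefficient of `dz` in the pull-back by `g` of the form `w̅ dw / (1 + κ |w|²)`, which is a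
primitive of the spherical area element up to the factor `2i`. -/
noncomputable def sphericalForm (κ : ℝ) (g : ℂ → ℂ) (z : ℂ) : ℂ :=
  conj (g z) * deriv g z / (1 + κ * ‖g z‖ ^ 2)

/-- The integrand of the flux of `sphericalForm κ g` through circles centred at `0`: on the circle
`z = r e^{iθ}` the form restricts to `i z Φ dθ`, where `Φ = sphericalForm κ g z`, and only the real
part of `z Φ` contributes to the enclosed area. -/
noncomputable def radialFlux (κ : ℝ) (g : ℂ → ℂ) (z : ℂ) : ℝ :=
  (z * sphericalForm κ g z).re

/-! ### Green's formula for the spherical area -/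

section Green

variable {κ : ℝ} {g : ℂ → ℂ} {z : ℂ} {U : Set ℂ}

lemma one_add_mul_norm_sq_ne_zero (hκ : 0 ≤ κ) (w : ℂ) : (1 + κ * ‖w‖ ^ 2 : ℂ) ≠ 0 := by
  have : (1 + κ * ‖w‖ ^ 2 : ℝ) ≠ 0 := by positivity
  exact_mod_cast this

lemma differentiableOn_sphericalForm (hκ : 0 ≤ κ) (hU : IsOpen U) (hg : DifferentiableOn ℂ g U) :
    DifferentiableOn ℝ (sphericalForm κ g) U := by
  have hg' : DifferentiableOn ℝ (deriv g) U := (hg.deriv hU).restrictScalars ℝ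
  have hgR : DifferentiableOn ℝ g U := hg.restrictScalars ℝ
  have hconj : DifferentiableOn ℝ (fun z ↦ conj (g z)) U := fun z hz ↦
    conjCLE.differentiableAt.comp_differentiableWithinAt z (hgR z hz)
  unfold sphericalForm
  simp only [← mul_conj']
  simp only [div_eq_mul_inv]
  refine (hconj.mul hg').mul (DifferentiableOn.inv ?_ fun z _ ↦ ?_)
  · fun_prop
  · simpa only [mul_conj'] using one_add_mul_norm_sq_ne_zero hκ (g z)

lemma fderiv_sphericalForm_apply (hκ : 0 ≤ κ) (hU : IsOpen U) (hg : DifferentiableOn ℂ g U)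
    (hz : z ∈ U) (v : ℂ) :
    fderiv ℝ (sphericalForm κ g) z v =
      (conj (g z) * deriv (deriv g) z / (1 + κ * ‖g z‖ ^ 2) -
        κ * (conj (g z) * deriv g z) ^ 2 / (1 + κ * ‖g z‖ ^ 2) ^ 2) * v +
      sphericalDensity κ g z * conj v := by
  have hzU := hU.mem_nhds hz
  have hline : HasDerivAt (fun t : ℝ ↦ z + t • v) v 0 := by
    simpa using ((hasDerivAt_id (0 : ℝ)).smul_const v).const_add z
  have hgv : HasDerivAt (fun t : ℝ ↦ g (z + t • v)) (deriv g z * v) 0 :=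
    HasDerivAt.comp_of_eq (h₂ := g) 0 (hg.differentiableAt hzU).hasDerivAt hline (by simp)
  have hg'v : HasDerivAt (fun t : ℝ ↦ deriv g (z + t • v)) (deriv (deriv g) z * v) 0 :=
    HasDerivAt.comp_of_eq (h₂ := deriv g) 0 ((hg.deriv hU).differentiableAt hzU).hasDerivAt hline
      (by simp)
  have hcv : HasDerivAt (fun t : ℝ ↦ conj (g (z + t • v))) (conj (deriv g z * v)) 0 :=
    conjCLE.hasFDerivAt.comp_hasDerivAt 0 hgv
  have hne := one_add_mul_norm_sq_ne_zero hκ (g z)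
  have hden := ((hgv.mul hcv).const_mul (κ : ℂ)).const_add 1
  have hquot := (hcv.mul hg'v).div hden (by simpa [mul_conj'] using hne)
  have hform : (fun t : ℝ ↦ sphericalForm κ g (z + t • v)) =
      ((fun t : ℝ ↦ conj (g (z + t • v))) * fun t : ℝ ↦ deriv g (z + t • v)) /
        fun t : ℝ ↦ 1 + κ * (g (z + t • v) * conj (g (z + t • v))) := by
    ext t; simp [sphericalForm, mul_conj']
  have hfd := ((differentiableOn_sphericalForm hκ hU hg).differentiableAt
    hzU).hasFDerivAt.hasLineDerivAt v
  rw [HasLineDerivAt, hform] at hfd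
  rw [hfd.unique hquot]
  simp only [map_mul, zero_smul, add_zero, real_smul, Pi.mul_apply, ofReal_zero, zero_mul,
    mul_conj', sphericalDensity, ofReal_div, ofReal_pow, ofReal_add, ofReal_one, ofReal_mul]
  rw [← mul_conj', ← mul_conj']
  rw [← mul_conj'] at hne
  field_simp
  ring

-- In complex notation: `∂(sphericalForm κ g)/∂z̅ = sphericalDensity κ g`.
lemma I_smul_fderiv_sub_fderiv_I_sphericalForm (hκ : 0 ≤ κ) (hU : IsOpen U)
    (hg : DifferentiableOn ℂ g U) (hz : z ∈ U) :
    I • fderiv ℝ (sphericalForm κ g) z 1 - fderiv ℝ (sphericalForm κ g) z I =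
      2 * I * sphericalDensity κ g z := by
  simp only [fderiv_sphericalForm_apply hκ hU hg hz, smul_eq_mul, map_one, conj_I]
  ring

lemma continuousOn_sphericalDensity (hκ : 0 ≤ κ) (hU : IsOpen U) (hg : DifferentiableOn ℂ g U) :
    ContinuousOn (sphericalDensity κ g) U :=
  ((hg.deriv hU).continuousOn.norm.pow 2).div
    ((continuousOn_const.add (continuousOn_const.mul (hg.continuousOn.norm.pow 2))).pow 2)
    fun z _ ↦ by positivity

lemma continuousOn_radialFlux (hκ : 0 ≤ κ) (hU : IsOpen U) (hg : DifferentiableOn ℂ g U) :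
    ContinuousOn (radialFlux κ g) U :=
  continuous_re.comp_continuousOn
    (continuousOn_id.mul (differentiableOn_sphericalForm hκ hU hg).continuousOn)

lemma sphericalForm_comp_exp (hg : DifferentiableAt ℂ g (exp z)) :
    sphericalForm κ (g ∘ exp) z = exp z * sphericalForm κ g (exp z) := by
  simp only [sphericalForm, deriv_comp z hg differentiableAt_exp, Function.comp_apply,
    Complex.deriv_exp]
  ring

lemma integral_sphericalForm_comp_exp {r : ℝ} (hr : 0 < r)
    (hκ : 0 ≤ κ) (hU : IsOpen U) (hg : DifferentiableOn ℂ g U) (hrU : sphere 0 r ⊆ U) :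
    (∫ y in 0..2 * π, sphericalForm κ (g ∘ exp) (Real.log r + y * I)).re =
      2 * π * circleAverage (radialFlux κ g) 0 r := by
  have hexp (y : ℝ) : exp (Real.log r + y * I) = circleMap 0 r y := by
    rw [exp_add, ← ofReal_exp, Real.exp_log hr, circleMap, zero_add]
  have hmem (y : ℝ) : circleMap 0 r y ∈ U := hrU (circleMap_mem_sphere 0 hr.le y)
  have hform (y : ℝ) : sphericalForm κ (g ∘ exp) (Real.log r + y * I) =
      circleMap 0 r y * sphericalForm κ g (circleMap 0 r y) := by
    rw [← hexp]
    exact sphericalForm_comp_exp (hg.differentiableAt (hU.mem_nhds (hexp y ▸ hmem y)))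
  have hint : IntervalIntegrable
      (fun y : ℝ ↦ circleMap 0 r y * sphericalForm κ g (circleMap 0 r y)) volume 0 (2 * π) := by
    refine Continuous.intervalIntegrable ((continuous_circleMap 0 r).mul ?_) _ _
    exact (differentiableOn_sphericalForm hκ hU hg).continuousOn.comp_continuous
      (continuous_circleMap 0 r) hmem
  simp only [hform]
  rw [← reCLM_apply, ← reCLM.intervalIntegral_comp_comm hint, Real.circleAverage_def, smul_eq_mul,
    mul_inv_cancel_left₀ Real.two_pi_pos.ne']
  rfl

lemma integral_sphericalForm_sub_of_periodic {G : ℂ → ℂ} {V : Set ℂ} {a b p : ℝ} (hκ : 0 ≤ κ)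
    (hV : IsOpen V) (hG : DifferentiableOn ℂ G V) (hper : Function.Periodic G (p * I))
    (hrect : [[a, b]] ×ℂ [[0, p]] ⊆ V) :
    (∫ y in 0..p, sphericalForm κ G (b + y * I)) - ∫ y in 0..p, sphericalForm κ G (a + y * I) =
      2 * ↑(∫ x in a..b, ∫ y in 0..p, sphericalDensity κ G (x + y * I)) := by
  have hdbar := fun z (hz : z ∈ [[a, b]] ×ℂ [[0, p]]) ↦
    I_smul_fderiv_sub_fderiv_I_sphericalForm hκ hV hG (hrect hz)
  have hint : IntegrableOn (fun z ↦ I • fderiv ℝ (sphericalForm κ G) z 1 -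
      fderiv ℝ (sphericalForm κ G) z I) ([[a, b]] ×ℂ [[0, p]]) := by
    refine ContinuousOn.integrableOn_compact (isCompact_uIcc.reProdIm isCompact_uIcc)
      (ContinuousOn.congr ?_ hdbar)
    exact continuousOn_const.mul (continuous_ofReal.comp_continuousOn
      ((continuousOn_sphericalDensity hκ hV hG).mono hrect))
  have hsides (x : ℝ) : sphericalForm κ G (x + p * I) = sphericalForm κ G (x + (0 : ℝ) * I) := by
    have hderiv : deriv G (x + p * I) = deriv G x := by
      rw [← deriv_comp_add_const, funext hper]
    simp only [sphericalForm, hper (x : ℂ), hderiv, ofReal_zero, zero_mul, add_zero]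
  have harea : (∫ x in a..b, ∫ y in 0..p, I • fderiv ℝ (sphericalForm κ G) (x + y * I) 1 -
      fderiv ℝ (sphericalForm κ G) (x + y * I) I) =
      2 * I * ↑(∫ x in a..b, ∫ y in 0..p, sphericalDensity κ G (x + y * I)) := by
    rw [← intervalIntegral.integral_ofReal, ← intervalIntegral.integral_const_mul]
    refine intervalIntegral.integral_congr fun x hx ↦ ?_
    rw [← intervalIntegral.integral_ofReal, ← intervalIntegral.integral_const_mul]
    refine intervalIntegral.integral_congr fun y hy ↦ hdbar _ ?_
    simpa [mem_reProdIm] using ⟨hx, hy⟩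
  have hgreen := (integral_boundary_rect_of_differentiableOn_real (sphericalForm κ G) ⟨a, 0⟩ ⟨b, p⟩
    ((differentiableOn_sphericalForm hκ hV hG).mono hrect) hint).trans harea
  simp only [hsides, sub_self, zero_add, smul_eq_mul, ← mul_sub] at hgreen
  exact mul_left_cancel₀ I_ne_zero (hgreen.trans (by ring))

lemma rect_subset_preimage_exp {r s : ℝ} (hr : 0 < r) (hrs : r ≤ s) (t : Set ℝ) :
    [[Real.log r, Real.log s]] ×ℂ t ⊆ exp ⁻¹' {z | ‖z‖ ∈ Icc r s} := by
  rintro z ⟨hz, -⟩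
  rw [mem_preimage, uIcc_of_le (Real.log_le_log hr hrs)] at hz
  rw [mem_preimage, mem_ofPred_eq, norm_exp]
  exact ⟨(Real.log_le_iff_le_exp hr).1 hz.1, (Real.le_log_iff_exp_le (hr.trans_le hrs)).1 hz.2⟩

lemma circleAverage_radialFlux_sub {r s : ℝ} (hκ : 0 ≤ κ) (hU : IsOpen U)
    (hg : DifferentiableOn ℂ g U) (hr : 0 < r) (hrs : r ≤ s) (hrsU : {z | ‖z‖ ∈ Icc r s} ⊆ U) :
    circleAverage (radialFlux κ g) 0 s - circleAverage (radialFlux κ g) 0 r =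
      π⁻¹ * ∫ x in Real.log r..Real.log s, ∫ y in 0..2 * π,
        sphericalDensity κ (g ∘ exp) (x + y * I) := by
  have hper : Function.Periodic (g ∘ exp) ((2 * π : ℝ) * I) := by
    simpa using exp_periodic.comp g
  have hsphere {t : ℝ} (ht : t ∈ Icc r s) : sphere 0 t ⊆ U := fun z hz ↦
    hrsU (by rwa [mem_ofPred_eq, mem_sphere_zero_iff_norm.1 hz])
  have hgreen := congrArg re <| integral_sphericalForm_sub_of_periodic hκ
    (hU.preimage continuous_exp) (hg.comp differentiable_exp.differentiableOn fun _ h ↦ h) hper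
    ((rect_subset_preimage_exp hr hrs _).trans (preimage_mono hrsU))
  rw [sub_re, integral_sphericalForm_comp_exp (hr.trans_le hrs) hκ hU hg (hsphere ⟨hrs, le_rfl⟩),
    integral_sphericalForm_comp_exp hr hκ hU hg (hsphere ⟨le_rfl, hrs⟩), re_mul_ofReal,
    re_ofNat] at hgreen
  rw [eq_inv_mul_iff_mul_eq₀ Real.pi_ne_zero]
  linarith

lemma integral_Ioi_mul_inv_one_add_mul_sq_sq {κ : ℝ} (hκ : 0 < κ) :
    IntegrableOn (fun t : ℝ ↦ t * ((1 + κ * t ^ 2) ^ 2)⁻¹) (Ioi 0) ∧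
      ∫ t in Ioi (0 : ℝ), t * ((1 + κ * t ^ 2) ^ 2)⁻¹ = (2 * κ)⁻¹ := by
  set F : ℝ → ℝ := fun t ↦ -(2 * κ)⁻¹ * (1 + κ * t ^ 2)⁻¹
  have hderiv (t : ℝ) : HasDerivAt F (t * ((1 + κ * t ^ 2) ^ 2)⁻¹) t := by
    have hne : 1 + κ * t ^ 2 ≠ 0 := by positivity
    refine (((((hasDerivAt_pow 2 t).const_mul κ).const_add 1).inv hne).const_mul
      (-(2 * κ)⁻¹)).congr_deriv ?_
    field_simp
    simp
  have hlim : Tendsto F atTop (𝓝 0) := by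
    have hden : Tendsto (fun t : ℝ ↦ 1 + κ * t ^ 2) atTop atTop :=
      tendsto_atTop_add_const_left _ _ ((tendsto_pow_atTop two_ne_zero).const_mul_atTop hκ)
    simpa [F] using hden.inv_tendsto_atTop.const_mul (-(2 * κ)⁻¹)
  have hint : IntegrableOn (fun t : ℝ ↦ t * ((1 + κ * t ^ 2) ^ 2)⁻¹) (Ioi 0) :=
    integrableOn_Ioi_deriv_of_nonneg' (fun t _ ↦ hderiv t)
      (fun t ht ↦ mul_nonneg (le_of_lt ht) (by positivity)) hlim
  refine ⟨hint, ?_⟩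
  rw [integral_Ioi_of_hasDerivAt_of_tendsto' (fun t _ ↦ hderiv t) hint hlim]
  simp [F]

lemma integrable_inv_one_add_mul_norm_sq_sq {κ : ℝ} (hκ : 0 < κ) :
    Integrable fun w : ℂ ↦ ((1 + κ * ‖w‖ ^ 2) ^ 2)⁻¹ := by
  rw [integrable_fun_norm_addHaar volume (f := fun t : ℝ ↦ ((1 + κ * t ^ 2) ^ 2)⁻¹)]
  simpa [finrank_real_complex] using (integral_Ioi_mul_inv_one_add_mul_sq_sq hκ).1

lemma integral_inv_one_add_mul_norm_sq_sq {κ : ℝ} (hκ : 0 < κ) :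
    ∫ w : ℂ, ((1 + κ * ‖w‖ ^ 2) ^ 2)⁻¹ = π / κ := by
  rw [integral_fun_norm_addHaar volume fun t : ℝ ↦ ((1 + κ * t ^ 2) ^ 2)⁻¹]
  simp only [finrank_real_complex, Measure.real, volume_ball, smul_eq_mul, nsmul_eq_mul,
    Nat.add_one_sub_one, pow_one, (integral_Ioi_mul_inv_one_add_mul_sq_sq hκ).2]
  simp only [Nat.cast_ofNat, ENNReal.ofReal_one, one_pow, one_mul, ENNReal.coe_toReal,
    NNReal.coe_real_pi, mul_inv_rev]
  field_simp

lemma det_restrictScalars_toSpanSingleton (c : ℂ) :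
    ((ContinuousLinearMap.toSpanSingleton ℂ c).restrictScalars ℝ).det = ‖c‖ ^ 2 := by
  simp [ContinuousLinearMap.det, LinearMap.det_restrictScalars, Algebra.norm_complex_eq,
    Complex.normSq_eq_norm_sq]

lemma integral_sphericalDensity_le (hκ : 0 < κ) (hU : IsOpen U) (hg : DifferentiableOn ℂ g U)
    {S : Set ℂ} (hS : MeasurableSet S) (hSU : S ⊆ U) (hinj : InjOn g S) :
    ∫ z in S, sphericalDensity κ g z ≤ π / κ := by
  have hfd (z : ℂ) (hz : z ∈ S) : HasFDerivWithinAt g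
      ((ContinuousLinearMap.toSpanSingleton ℂ (deriv g z)).restrictScalars ℝ) S z :=
    ((hg.differentiableAt (hU.mem_nhds (hSU hz))).hasDerivAt.hasFDerivAt.restrictScalars
      ℝ).hasFDerivWithinAt
  calc ∫ z in S, sphericalDensity κ g z
      = ∫ w in g '' S, ((1 + κ * ‖w‖ ^ 2) ^ 2)⁻¹ := by
        rw [integral_image_eq_integral_abs_det_fderiv_smul volume hS hfd hinj]
        simp only [det_restrictScalars_toSpanSingleton, abs_sq, smul_eq_mul, ← div_eq_mul_inv,
          sphericalDensity]
    _ ≤ ∫ w : ℂ, ((1 + κ * ‖w‖ ^ 2) ^ 2)⁻¹ :=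
        setIntegral_le_integral (integrable_inv_one_add_mul_norm_sq_sq hκ)
          (ae_of_all _ fun w ↦ by positivity)
    _ = π / κ := integral_inv_one_add_mul_norm_sq_sq hκ

lemma intervalIntegral_intervalIntegral_eq_setIntegral_reProdIm {u : ℂ → ℝ} {a b c d : ℝ}
    (hab : a ≤ b) (hcd : c ≤ d) (hu : ContinuousOn u ([[a, b]] ×ℂ [[c, d]])) :
    ∫ x in a..b, ∫ y in c..d, u (x + y * I) = ∫ z in Ioc a b ×ℂ Ioc c d, u z := by
  have hpre : measurableEquivRealProd.symm ⁻¹' (Ioc a b ×ℂ Ioc c d) = Ioc a b ×ˢ Ioc c d := rfl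
  have hint : IntegrableOn (fun q : ℝ × ℝ ↦ u (q.1 + q.2 * I)) (Ioc a b ×ˢ Ioc c d) := by
    refine IntegrableOn.mono_set (t := [[a, b]] ×ˢ [[c, d]]) ?_ ?_
    · refine ContinuousOn.integrableOn_compact (isCompact_uIcc.prod isCompact_uIcc) ?_
      refine hu.comp (by fun_prop) fun q hq ↦ ?_
      simpa [mem_reProdIm] using mem_prod.1 hq
    · exact prod_mono (Ioc_subset_Icc_self.trans Icc_subset_uIcc)
        (Ioc_subset_Icc_self.trans Icc_subset_uIcc)
  rw [← volume_preserving_equiv_real_prod.symm.setIntegral_preimage_emb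
    measurableEquivRealProd.symm.measurableEmbedding, hpre]
  simp only [measurableEquivRealProd_symm_apply, mk_eq_add_mul_I]
  rw [Measure.volume_eq_prod, setIntegral_prod _ hint, intervalIntegral.integral_of_le hab]
  simp only [intervalIntegral.integral_of_le hcd]

lemma injOn_exp_reProdIm (t : Set ℝ) : InjOn exp (t ×ℂ Ioc 0 (2 * π)) := by
  intro z hz w hw h
  have him {v : ℂ} (hv : v ∈ t ×ℂ Ioc 0 (2 * π)) :
      -π < (v - π * I).im ∧ (v - π * I).im ≤ π := by
    have := hv.2
    simp only [mem_preimage, mem_Ioc, sub_im, mul_im, ofReal_re, I_im, ofReal_im, I_re] at this ⊢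
    constructor <;> linarith
  have hshift : exp (z - π * I) = exp (w - π * I) := by rw [exp_sub, exp_sub, h]
  exact sub_left_injective
    (exp_inj_of_neg_pi_lt_of_le_pi (him hz).1 (him hz).2 (him hw).1 (him hw).2 hshift)

lemma circleAverage_radialFlux_mono {r s : ℝ} (hκ : 0 ≤ κ) (hU : IsOpen U)
    (hg : DifferentiableOn ℂ g U) (hr : 0 < r) (hrs : r ≤ s) (hrsU : {z | ‖z‖ ∈ Icc r s} ⊆ U) :
    circleAverage (radialFlux κ g) 0 r ≤ circleAverage (radialFlux κ g) 0 s := by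
  rw [← sub_nonneg, circleAverage_radialFlux_sub hκ hU hg hr hrs hrsU]
  refine mul_nonneg (by positivity) (intervalIntegral.integral_nonneg (Real.log_le_log hr hrs)
    fun x _ ↦ intervalIntegral.integral_nonneg Real.two_pi_pos.le fun y _ ↦ ?_)
  unfold sphericalDensity
  positivity

lemma circleAverage_radialFlux_le_add_inv {r s : ℝ} (hκ : 0 < κ) (hU : IsOpen U)
    (hg : DifferentiableOn ℂ g U) (hr : 0 < r) (hrs : r ≤ s) (hrsU : {z | ‖z‖ ∈ Icc r s} ⊆ U)
    (hinj : InjOn g U) :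
    circleAverage (radialFlux κ g) 0 s ≤ circleAverage (radialFlux κ g) 0 r + κ⁻¹ := by
  have hV : IsOpen (exp ⁻¹' U) := hU.preimage continuous_exp
  have hgV : DifferentiableOn ℂ (g ∘ exp) (exp ⁻¹' U) :=
    hg.comp differentiable_exp.differentiableOn fun _ h ↦ h
  have hrect (t : Set ℝ) : [[Real.log r, Real.log s]] ×ℂ t ⊆ exp ⁻¹' U :=
    (rect_subset_preimage_exp hr hrs t).trans (preimage_mono hrsU)
  have hsub : Ioc (Real.log r) (Real.log s) ×ℂ Ioc 0 (2 * π) ⊆ exp ⁻¹' U := fun z hz ↦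
    hrect (Ioc 0 (2 * π)) ⟨Icc_subset_uIcc (Ioc_subset_Icc_self hz.1), hz.2⟩
  have harea := integral_sphericalDensity_le hκ hV hgV
    ((measurable_re measurableSet_Ioc).inter (measurable_im measurableSet_Ioc)) hsub
    (hinj.comp (injOn_exp_reProdIm _) fun z hz ↦ hsub hz)
  rw [← sub_le_iff_le_add', circleAverage_radialFlux_sub hκ.le hU hg hr hrs hrsU,
    intervalIntegral_intervalIntegral_eq_setIntegral_reProdIm (Real.log_le_log hr hrs)
      Real.two_pi_pos.le ((continuousOn_sphericalDensity hκ.le hV hgV).mono (hrect _))]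
  calc _ ≤ π⁻¹ * (π / κ) := mul_le_mul_of_nonneg_left harea (by positivity)
    _ = κ⁻¹ := by field_simp

end Green

lemma tendsto_circleAverage_nhdsGT_zero {u : ℂ → ℝ} {R c : ℝ} (hR : 0 < R)
    (hu : ContinuousOn u (ball 0 R \ {0})) (hlim : Tendsto u (𝓝[≠] 0) (𝓝 c)) :
    Tendsto (fun r ↦ circleAverage u 0 r) (𝓝[>] 0) (𝓝 c) := by
  set v := Function.update u 0 c
  have hv : ContinuousOn v (ball 0 R) :=
    continuousOn_update_iff.2 ⟨hu, fun _ ↦ hlim.mono_left (nhdsWithin_mono _ fun z hz ↦ hz.2)⟩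
  have havg : ContinuousOn (circleAverage v 0) (Ico 0 R) := by
    refine Real.ContinuousOn.circleAverage (hv.mono fun z hz ↦ ?_) fun r hr ↦ hr.1
    simpa using hz.2
  have hlim' : Tendsto (circleAverage v 0) (𝓝[>] 0) (𝓝 c) := by
    have := (havg 0 ⟨le_rfl, hR⟩).mono_left (nhdsWithin_mono 0 Ioo_subset_Ico_self)
    rwa [nhdsWithin_Ioo_eq_nhdsGT hR, Real.circleAverage_zero,
      show v 0 = c from Function.update_self ..] at this
  refine hlim'.congr' ?_
  filter_upwards [self_mem_nhdsWithin] with r (hr : 0 < r)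
  refine Real.circleAverage_congr_sphere fun z hz ↦ Function.update_of_ne ?_ _ _
  rintro rfl
  exact hr.ne (by simpa [abs_of_pos hr] using hz)

/-! ### The flux around a simple pole and the area theorem -/

section AreaTheorem

variable {κ R ρ : ℝ} {g h : ℂ → ℂ} {z : ℂ} {U : Set ℂ}

lemma radialFlux_eq_div (κ : ℝ) (g : ℂ → ℂ) (z : ℂ) :
    radialFlux κ g z = (z * conj (g z) * deriv g z).re / (1 + κ * ‖g z‖ ^ 2) := by
  rw [radialFlux, sphericalForm, ← div_ofReal_re]
  push_cast
  ring_nf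

lemma radialFlux_zero (g : ℂ → ℂ) (z : ℂ) :
    radialFlux 0 g z = (z * conj (g z) * deriv g z).re := by
  simp [radialFlux_eq_div]

lemma tendsto_circleAverage_radialFlux_nhdsGT_zero (hU : IsOpen U) (hg : DifferentiableOn ℂ g U)
    (hρ : 0 ≤ ρ) (hρU : sphere 0 ρ ⊆ U) :
    Tendsto (fun κ ↦ circleAverage (radialFlux κ g) 0 ρ) (𝓝[>] 0)
      (𝓝 (circleAverage (radialFlux 0 g) 0 ρ)) := by
  have hmem (θ : ℝ) : circleMap 0 ρ θ ∈ U := hρU (circleMap_mem_sphere 0 hρ θ)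
  have hcont {κ : ℝ} (hκ : 0 ≤ κ) : Continuous fun θ ↦ radialFlux κ g (circleMap 0 ρ θ) :=
    (continuousOn_radialFlux hκ hU hg).comp_continuous (continuous_circleMap 0 ρ) hmem
  have hbound {κ : ℝ} (hκ : 0 ≤ κ) (z : ℂ) : |radialFlux κ g z| ≤ |radialFlux 0 g z| := by
    have hden : 1 ≤ 1 + κ * ‖g z‖ ^ 2 := le_add_of_nonneg_right (by positivity)
    rw [radialFlux_eq_div, radialFlux_zero, abs_div, abs_of_pos (one_pos.trans_le hden)]
    exact div_le_self (abs_nonneg _) hden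
  have hlim (z : ℂ) : Tendsto (fun κ ↦ radialFlux κ g z) (𝓝[>] 0) (𝓝 (radialFlux 0 g z)) := by
    have : Continuous fun κ : ℝ ↦ 1 + κ * ‖g z‖ ^ 2 := by fun_prop
    simp only [radialFlux_eq_div]
    exact ((continuousAt_const.div this.continuousAt (by simp)).tendsto).mono_left
      nhdsWithin_le_nhds
  refine Tendsto.const_smul (intervalIntegral.tendsto_integral_filter_of_dominated_convergence
    (fun θ ↦ |radialFlux 0 g (circleMap 0 ρ θ)|) ?_ ?_ ?_ ?_) (2 * π)⁻¹
  · filter_upwards [self_mem_nhdsWithin] with κ (hκ : 0 < κ)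
    exact (hcont hκ.le).aestronglyMeasurable
  · filter_upwards [self_mem_nhdsWithin] with κ (hκ : 0 < κ)
    exact ae_of_all _ fun θ _ ↦ hbound hκ.le _
  · exact (hcont le_rfl).abs.intervalIntegrable _ _
  · exact ae_of_all _ fun θ _ ↦ hlim _

lemma circleAverage_radialFlux_nonneg (hκ : 0 ≤ κ) (hh : DifferentiableOn ℂ h (ball 0 R))
    (hρ : 0 < ρ) (hρR : ρ < R) : 0 ≤ circleAverage (radialFlux κ h) 0 ρ := by
  have hR := hρ.trans hρR
  have hcont := continuousOn_radialFlux hκ isOpen_ball hh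
  have hlim : Tendsto (radialFlux κ h) (𝓝[≠] 0) (𝓝 0) := by
    have : radialFlux κ h 0 = 0 := by simp [radialFlux]
    simpa [this] using (hcont.continuousAt (ball_mem_nhds 0 hR)).tendsto.mono_left
      nhdsWithin_le_nhds
  refine le_of_tendsto (tendsto_circleAverage_nhdsGT_zero hR (hcont.mono sdiff_subset) hlim) ?_
  filter_upwards [Ioo_mem_nhdsGT hρ] with r hr
  exact circleAverage_radialFlux_mono hκ isOpen_ball hh hr.1 hr.2.le fun z hz ↦ by
    simpa using hz.2.trans_lt hρR

lemma circleAverage_add_re_of_differentiableOn {u : ℂ → ℝ} {q : ℂ → ℂ} (hρ : 0 ≤ ρ) (hρR : ρ < R)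
    (hu : ContinuousOn u (sphere 0 ρ)) (hq : DifferentiableOn ℂ q (ball 0 R)) :
    circleAverage (fun z ↦ u z + (q z).re) 0 ρ = circleAverage u 0 ρ + (q 0).re := by
  have hsub : closedBall (0 : ℂ) ρ ⊆ ball 0 R := closedBall_subset_ball hρR
  have hqc : ContinuousOn q (sphere 0 ρ) :=
    hq.continuousOn.mono (sphere_subset_closedBall.trans hsub)
  have hmean : circleAverage q 0 ρ = q 0 :=
    (hq.diffContOnCl_ball (by rwa [abs_of_nonneg hρ])).circleAverage
  calc circleAverage (fun z ↦ u z + (q z).re) 0 ρ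
      = circleAverage u 0 ρ + circleAverage (reCLM ∘ q) 0 ρ :=
        Real.circleAverage_fun_add (hu.circleIntegrable hρ)
          ((continuous_re.comp_continuousOn hqc).circleIntegrable hρ)
    _ = circleAverage u 0 ρ + (q 0).re := by
        rw [reCLM.circleAverage_comp_comm (hqc.circleIntegrable hρ), hmean, reCLM_apply]

lemma eq_add_mul_dslope (h : ℂ → ℂ) (z : ℂ) : h z = h 0 + z * dslope h 0 z := by
  simpa [sub_eq_iff_eq_add'] using (sub_smul_dslope h 0 z).symm

lemma differentiableOn_dslope_ball (hR : 0 < R) (hh : DifferentiableOn ℂ h (ball 0 R)) :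
    DifferentiableOn ℂ (dslope h 0) (ball 0 R) :=
  (differentiableOn_dslope (ball_mem_nhds 0 hR)).2 hh

lemma re_mul_conj_mul_linear_add (z b c d s : ℂ) :
    (z * conj (b * z + (c + z * s)) * (b + d)).re = (z * conj (c + z * s) * d).re +
      (‖b‖ ^ 2 * ‖z‖ ^ 2 + b * conj c * z + ‖z‖ ^ 2 * conj b * (s + d)).re := by
  simp only [← ofReal_pow, Complex.sq_norm, normSq_apply]
  simp only [map_add, map_mul, mul_re, add_re, conj_re, conj_im, mul_neg, neg_mul, neg_neg, add_im,
    mul_im, ofReal_add, ofReal_mul, ofReal_re, ofReal_im, mul_zero, sub_zero, zero_mul, add_zero,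
    sub_neg_eq_add, neg_zero]
  ring

lemma norm_deriv_sq_mul_sq_le_circleAverage_radialFlux (hh : DifferentiableOn ℂ h (ball 0 R))
    (hρ : 0 < ρ) (hρR : ρ < R) :
    ‖deriv h 0‖ ^ 2 * ρ ^ 2 ≤ circleAverage (radialFlux 0 h) 0 ρ := by
  set b := deriv h 0
  set H : ℂ → ℂ := fun z ↦ h z - b * z
  have hball : ball (0 : ℂ) R ∈ 𝓝 0 := ball_mem_nhds 0 (hρ.trans hρR)
  have hH : DifferentiableOn ℂ H (ball 0 R) := hh.sub (by fun_prop)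
  have hH' {z : ℂ} (hz : z ∈ ball 0 R) : deriv h z = b + deriv H z := by
    have hadd := (hasDerivAt_const_mul b).add
      (hH.hasDerivAt (isOpen_ball.mem_nhds hz))
    exact (hadd.congr_of_eventuallyEq (.of_forall fun w ↦ by simp [H])).deriv
  -- On the circle `‖z‖ = ρ` the terms of the flux that involve `b` make up the real part of a
  -- holomorphic function, whose mean is its value at the centre.
  set q : ℂ → ℂ := fun z ↦
    ‖b‖ ^ 2 * ρ ^ 2 + b * conj (H 0) * z + ρ ^ 2 * conj b * (dslope H 0 z + deriv H z)
  have hq : DifferentiableOn ℂ q (ball 0 R) :=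
    DifferentiableOn.add (by fun_prop) (((differentiableOn_dslope_ball (hρ.trans hρR) hH).add
      (hH.deriv isOpen_ball)).const_mul _)
  have hq0 : (q 0).re = ‖b‖ ^ 2 * ρ ^ 2 := by
    have hH'0 : deriv H 0 = 0 := left_eq_add.1 (hH' (mem_of_mem_nhds hball))
    simp only [q, dslope_same, hH'0, add_zero, mul_zero]
    norm_cast
  have hsplit : EqOn (radialFlux 0 h) (fun z ↦ radialFlux 0 H z + (q z).re) (sphere 0 |ρ|) := by
    intro z hz
    have hzρ : ‖z‖ = ρ := by simpa [abs_of_pos hρ] using hz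
    have hhz : h z = b * z + H z := by simp [H]
    simp only [radialFlux_zero, hhz, hH' (mem_ball_zero_iff.2 (hzρ ▸ hρR)), q, ← hzρ]
    rw [eq_add_mul_dslope H z]
    exact re_mul_conj_mul_linear_add ..
  have hHc : ContinuousOn (radialFlux 0 H) (sphere 0 ρ) :=
    (continuousOn_radialFlux le_rfl isOpen_ball hH).mono
      (sphere_subset_closedBall.trans (closedBall_subset_ball hρR))
  rw [Real.circleAverage_congr_sphere hsplit,
    circleAverage_add_re_of_differentiableOn hρ.le hρR hHc hq, hq0]
  exact le_add_of_nonneg_left (circleAverage_radialFlux_nonneg le_rfl hH hρ hρR)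

lemma hasDerivAt_inv_add (hh : DifferentiableOn ℂ h (ball 0 R)) (hz : z ∈ ball 0 R) (hz0 : z ≠ 0) :
    HasDerivAt (fun z ↦ z⁻¹ + h z) (-(z ^ 2)⁻¹ + deriv h z) z :=
  (hasDerivAt_inv hz0).add (hh.hasDerivAt (isOpen_ball.mem_nhds hz))

lemma radialFlux_inv_add (κ : ℝ) (hh : DifferentiableOn ℂ h (ball 0 R)) (hz : z ∈ ball 0 R)
    (hz0 : z ≠ 0) :
    radialFlux κ (fun z ↦ z⁻¹ + h z) z =
      (conj (1 + z * h z) * (-1 + z ^ 2 * deriv h z)).re / (‖z‖ ^ 2 + κ * ‖1 + z * h z‖ ^ 2) := by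
  have hg : z⁻¹ + h z = z⁻¹ * (1 + z * h z) := by field_simp
  have hnum : z * conj (z⁻¹ + h z) * (-(z ^ 2)⁻¹ + deriv h z) =
      conj (1 + z * h z) * (-1 + z ^ 2 * deriv h z) / (‖z‖ ^ 2 : ℝ) := by
    rw [ofReal_pow, ← mul_conj', hg, map_mul, map_inv₀]
    have : conj z ≠ 0 := by simpa
    field_simp
  rw [radialFlux_eq_div, (hasDerivAt_inv_add hh hz hz0).deriv, hnum, div_ofReal_re, hg, norm_mul,
    norm_inv, div_div]
  congr 1
  field_simp

lemma tendsto_radialFlux_inv_add (hκ : 0 < κ) (hR : 0 < R) (hh : DifferentiableOn ℂ h (ball 0 R)) :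
    Tendsto (radialFlux κ fun z ↦ z⁻¹ + h z) (𝓝[≠] 0) (𝓝 (-κ⁻¹)) := by
  have hball : ball (0 : ℂ) R ∈ 𝓝 0 := ball_mem_nhds 0 hR
  have hcont : ContinuousAt (fun z ↦ (conj (1 + z * h z) * (-1 + z ^ 2 * deriv h z)).re /
      (‖z‖ ^ 2 + κ * ‖1 + z * h z‖ ^ 2)) 0 := by
    have hc : ContinuousAt h 0 := hh.continuousOn.continuousAt hball
    have hc' : ContinuousAt (deriv h) 0 := (hh.deriv isOpen_ball).continuousOn.continuousAt hball
    refine ContinuousAt.div ?_ (by fun_prop) (by simpa using hκ.ne')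
    exact continuous_re.continuousAt.comp (ContinuousAt.mul
      (continuous_conj.continuousAt.comp (by fun_prop)) (by fun_prop))
  have hlim := hcont.tendsto.mono_left (nhdsWithin_le_nhds (s := {0}ᶜ))
  simp only [zero_mul, add_zero, map_one, one_mul, ne_eq, OfNat.ofNat_ne_zero, not_false_eq_true,
    zero_pow, norm_zero, norm_one, one_pow, mul_one, zero_add, neg_re, one_re, neg_div,
    one_div] at hlim
  refine hlim.congr' ?_
  filter_upwards [nhdsWithin_le_nhds hball, self_mem_nhdsWithin] with z hz hz0
  exact (radialFlux_inv_add κ hh hz hz0).symm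

lemma circleAverage_radialFlux_inv_add_nonpos (hh : DifferentiableOn ℂ h (ball 0 R))
    (hinj : InjOn (fun z ↦ z⁻¹ + h z) (ball 0 R \ {0})) (hρ : 0 < ρ) (hρR : ρ < R) :
    circleAverage (radialFlux 0 fun z ↦ z⁻¹ + h z) 0 ρ ≤ 0 := by
  have hR := hρ.trans hρR
  set U : Set ℂ := ball 0 R \ {0}
  have hU : IsOpen U := isOpen_ball.sdiff isClosed_singleton
  have hg : DifferentiableOn ℂ (fun z ↦ z⁻¹ + h z) U := fun z hz ↦
    (hasDerivAt_inv_add hh hz.1 hz.2).differentiableAt.differentiableWithinAt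
  have hmem {r : ℝ} (hr : 0 < r) : {z : ℂ | ‖z‖ ∈ Icc r ρ} ⊆ U := fun z hz ↦
    ⟨mem_ball_zero_iff.2 (hz.2.trans_lt hρR), norm_pos_iff.1 (hr.trans_le hz.1)⟩
  have hflux {κ : ℝ} (hκ : 0 < κ) : circleAverage (radialFlux κ fun z ↦ z⁻¹ + h z) 0 ρ ≤ 0 := by
    have hlim := (tendsto_circleAverage_nhdsGT_zero hR (continuousOn_radialFlux hκ.le hU hg)
      (tendsto_radialFlux_inv_add hκ hR hh)).add_const κ⁻¹
    rw [neg_add_cancel] at hlim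
    refine ge_of_tendsto hlim ?_
    filter_upwards [Ioo_mem_nhdsGT hρ] with r hr
    exact circleAverage_radialFlux_le_add_inv hκ hU hg hr.1 hr.2.le (hmem hr.1) hinj
  refine le_of_tendsto
    (tendsto_circleAverage_radialFlux_nhdsGT_zero hU hg hρ.le fun z hz ↦ hmem hρ ?_) ?_
  · simp [mem_sphere_zero_iff_norm.1 hz]
  · filter_upwards [self_mem_nhdsWithin] with κ using hflux

lemma re_conj_one_add_mul (z w d : ℂ) :
    (conj (1 + z * w) * (-1 + z ^ 2 * d)).re / ‖z‖ ^ 2 =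
      (z * conj w * d).re + ((-1 - z * w + z ^ 2 * d) / ‖z‖ ^ 2).re := by
  rcases eq_or_ne z 0 with rfl | hz
  · simp
  rw [← ofReal_pow, div_ofReal_re]
  field_simp
  simp only [Complex.sq_norm, normSq_apply]
  simp only [map_add, map_one, map_mul, pow_two, mul_re, add_re, one_re, conj_re, conj_im, mul_neg,
    neg_mul, neg_neg, neg_re, mul_im, add_im, one_im, zero_add, neg_im, neg_zero, sub_neg_eq_add,
    sub_re]
  ring

lemma circleAverage_radialFlux_inv_add (hh : DifferentiableOn ℂ h (ball 0 R)) (hρ : 0 < ρ)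
    (hρR : ρ < R) :
    circleAverage (radialFlux 0 fun z ↦ z⁻¹ + h z) 0 ρ =
      circleAverage (radialFlux 0 h) 0 ρ - (ρ ^ 2)⁻¹ := by
  set q : ℂ → ℂ := fun z ↦ (-1 - z * h z + z ^ 2 * deriv h z) / ρ ^ 2
  have hq : DifferentiableOn ℂ q (ball 0 R) := by
    have := hh.deriv isOpen_ball
    fun_prop
  have hq0 : (q 0).re = -(ρ ^ 2)⁻¹ := by
    simp only [q, ← ofReal_pow, div_ofReal_re]
    simp [neg_div]
  have hsplit : EqOn (radialFlux 0 fun z ↦ z⁻¹ + h z) (fun z ↦ radialFlux 0 h z + (q z).re)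
      (sphere 0 |ρ|) := by
    intro z hz
    have hzρ : ‖z‖ = ρ := by simpa [abs_of_pos hρ] using hz
    rw [radialFlux_inv_add 0 hh (mem_ball_zero_iff.2 (hzρ ▸ hρR)) (norm_pos_iff.1 (hzρ ▸ hρ)),
      zero_mul, add_zero, re_conj_one_add_mul]
    simp only [q, hzρ, radialFlux_zero]
  have hc : ContinuousOn (radialFlux 0 h) (sphere 0 ρ) :=
    (continuousOn_radialFlux le_rfl isOpen_ball hh).mono
      (sphere_subset_closedBall.trans (closedBall_subset_ball hρR))
  rw [Real.circleAverage_congr_sphere hsplit,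
    circleAverage_add_re_of_differentiableOn hρ.le hρR hc hq, hq0, ← sub_eq_add_neg]

theorem norm_deriv_mul_sq_le_one_of_injOn_inv_add (hR : 0 < R)
    (hh : DifferentiableOn ℂ h (ball 0 R))
    (hinj : InjOn (fun z ↦ z⁻¹ + h z) (ball 0 R \ {0})) : ‖deriv h 0‖ * R ^ 2 ≤ 1 := by
  have hlt {ρ : ℝ} (hρ : ρ ∈ Ioo 0 R) : ‖deriv h 0‖ * ρ ^ 2 ≤ 1 := by
    have hle := norm_deriv_sq_mul_sq_le_circleAverage_radialFlux hh hρ.1 hρ.2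
    have hnonpos := circleAverage_radialFlux_inv_add_nonpos hh hinj hρ.1 hρ.2
    rw [circleAverage_radialFlux_inv_add hh hρ.1 hρ.2, sub_nonpos] at hnonpos
    have hρ2 : 0 < ρ ^ 2 := pow_pos hρ.1 2
    have := (le_inv_mul_iff₀ hρ2).1 ((hle.trans hnonpos).trans_eq (mul_one _).symm)
    exact (sq_le_one_iff₀ (by positivity)).1 (by linarith)
  refine le_of_tendsto (f := fun ρ : ℝ ↦ ‖deriv h 0‖ * ρ ^ 2) (x := 𝓝[<] R) ?_ ?_
  · exact Continuous.tendsto' (by fun_prop) _ _ rfl |>.mono_left nhdsWithin_le_nhds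
  · filter_upwards [Ioo_mem_nhdsLT hR] with ρ using hlt

end AreaTheorem

/-! ### Coefficients of univalent functions -/

section Univalent

variable {f : ℂ → ℂ}

lemma dslope_zero_ne_zero_of_injOn {U : Set ℂ} (hinj : InjOn f U) (h0 : 0 ∈ U)
    (hf' : deriv f 0 ≠ 0) {z : ℂ} (hz : z ∈ U) : dslope f 0 z ≠ 0 := by
  intro h
  obtain rfl : z = 0 := hinj hz h0 (by rw [eq_add_mul_dslope f z, h, mul_zero, add_zero])
  exact hf' (dslope_same f 0 ▸ h)

lemma exists_sq_mul_eq_one {φ : ℂ → ℂ} {c : ℂ} {R : ℝ} (hR : 0 < R)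
    (hφ : DifferentiableOn ℂ φ (ball c R)) (hne : ∀ z ∈ ball c R, φ z ≠ 0) (hc : φ c = 1) :
    ∃ s : ℂ → ℂ, DifferentiableOn ℂ s (ball c R) ∧ s c = 1 ∧ ∀ z ∈ ball c R, s z ^ 2 * φ z = 1 := by
  obtain ⟨L, hLc, hL⟩ := ((hφ.deriv isOpen_ball).div hφ hne).isExactOn_ball.with_val_at c 0
  have hderiv (z : ℂ) (hz : z ∈ ball c R) : HasDerivAt (fun z ↦ exp (-L z) * φ z) 0 z := by
    refine ((hL z hz).neg.cexp.mul
      (hφ.differentiableAt (isOpen_ball.mem_nhds hz)).hasDerivAt).congr_deriv ?_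
    have := hne z hz
    simp only [Pi.div_apply, Pi.neg_apply]
    field_simp
    ring
  have hconst (z : ℂ) (hz : z ∈ ball c R) : exp (-L z) * φ z = 1 := by
    have := isOpen_ball.is_const_of_deriv_eq_zero (convex_ball c R).isPreconnected
      (fun z hz ↦ (hderiv z hz).differentiableAt.differentiableWithinAt)
      (fun z hz ↦ (hderiv z hz).deriv) hz (mem_ball_self hR)
    simpa [hLc, hc] using this
  refine ⟨fun z ↦ exp (-L z / 2), ?_, by simp [hLc], fun z hz ↦ ?_⟩
  · exact fun z hz ↦ ((hL z hz).neg.div_const 2).cexp.differentiableAt.differentiableWithinAt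
  · rw [← exp_nat_mul, Nat.cast_ofNat, mul_div_cancel₀ _ two_ne_zero, hconst z hz]

-- If `f z = f 0 + z + a₂ z² + a₃ z³ + …`, then `deriv (dslope f 0) 0 = a₂` and
-- `deriv (dslope (dslope f 0) 0) 0 = a₃`.
theorem norm_deriv_dslope_sq_sub_le_one_of_injOn (hf : DifferentiableOn ℂ f (ball 0 1))
    (hf' : deriv f 0 = 1) (hinj : InjOn f (ball 0 1)) :
    ‖deriv (dslope f 0) 0 ^ 2 - deriv (dslope (dslope f 0) 0) 0‖ ≤ 1 := by
  set φ := dslope f 0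
  set φ₁ := dslope φ 0
  have h0 : (0 : ℂ) ∈ ball 0 1 := mem_ball_self one_pos
  have hφ : DifferentiableOn ℂ φ (ball 0 1) := differentiableOn_dslope_ball one_pos hf
  have hφ₁ : DifferentiableOn ℂ φ₁ (ball 0 1) := differentiableOn_dslope_ball one_pos hφ
  have hφ0 : φ 0 = 1 := (dslope_same f 0).trans hf'
  have hne {z : ℂ} (hz : z ∈ ball 0 1) : φ z ≠ 0 :=
    dslope_zero_ne_zero_of_injOn hinj h0 (by simp [hf']) hz
  have hrecip : EqOn (fun z ↦ z⁻¹ + -φ₁ z / φ z) (fun z ↦ (f z - f 0)⁻¹) (ball 0 1 \ {0}) := by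
    rintro z ⟨hz, hz0 : z ≠ 0⟩
    have hzφ := hne hz
    simp only [eq_add_mul_dslope f z, add_sub_cancel_left]
    change z⁻¹ + -φ₁ z / φ z = (z * φ z)⁻¹
    field_simp
    rw [eq_add_mul_dslope φ z, hφ0]
    ring
  have hinj' : InjOn (fun z ↦ z⁻¹ + -φ₁ z / φ z) (ball 0 1 \ {0}) :=
    hrecip.injOn_iff.2 fun z hz w hw h ↦ hinj hz.1 hw.1 (sub_left_injective (inv_injective h))
  have hderiv : HasDerivAt (fun z ↦ -φ₁ z / φ z) (deriv φ 0 ^ 2 - deriv φ₁ 0) 0 := by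
    refine ((hφ₁.hasDerivAt (isOpen_ball.mem_nhds h0)).neg.div
      (hφ.hasDerivAt (isOpen_ball.mem_nhds h0)) (hne h0)).congr_deriv ?_
    simp only [hφ0, Pi.neg_apply, φ₁, dslope_same]
    ring
  have harea := norm_deriv_mul_sq_le_one_of_injOn_inv_add (h := fun z ↦ -φ₁ z / φ z) one_pos
    (hφ₁.neg.div hφ fun z ↦ hne) hinj'
  rwa [hderiv.deriv, one_pow, mul_one] at harea

lemma mapsTo_sq_unitBall : MapsTo (fun z : ℂ ↦ z ^ 2) (ball 0 1) (ball 0 1) := by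
  intro z hz
  rw [mem_ball_zero_iff] at hz ⊢
  simpa using pow_lt_one₀ (norm_nonneg z) hz two_ne_zero

lemma injOn_inv_add_mul_dslope_sq {s : ℂ → ℂ} (hinj : InjOn f (ball 0 1))
    (hs0 : s 0 = 1) (hs : ∀ z ∈ ball 0 1, s z ^ 2 * dslope f 0 z = 1) :
    InjOn (fun z ↦ z⁻¹ + z * dslope s 0 (z ^ 2)) (ball 0 1 \ {0}) := by
  set g : ℂ → ℂ := fun z ↦ z⁻¹ + z * dslope s 0 (z ^ 2)
  have hodd (z : ℂ) : g (-z) = -g z := by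
    simp only [g, inv_neg, even_two.neg_pow]
    ring
  have hsq {z : ℂ} (hz : z ∈ ball 0 1 \ {0}) : g z ^ 2 * (f (z ^ 2) - f 0) = 1 := by
    have hz0 : z ≠ 0 := hz.2
    have hg : g z = z⁻¹ * s (z ^ 2) := by
      rw [eq_add_mul_dslope s (z ^ 2), hs0]
      simp only [g]
      field_simp
    rw [hg, eq_add_mul_dslope f (z ^ 2), add_sub_cancel_left, ← hs _ (mapsTo_sq_unitBall hz.1)]
    field_simp
  intro z hz w hw hzw
  have hfsq : f (z ^ 2) = f (w ^ 2) := by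
    have hgw : g w ^ 2 ≠ 0 := left_ne_zero_of_mul_eq_one (hsq hw)
    have := hsq hz
    rw [hzw, ← hsq hw] at this
    exact sub_left_injective (mul_left_cancel₀ hgw this)
  have hzsq : z ^ 2 = w ^ 2 := hinj (mapsTo_sq_unitBall hz.1) (mapsTo_sq_unitBall hw.1) hfsq
  rcases sq_eq_sq_iff_eq_or_eq_neg.1 hzsq with h | rfl
  · exact h
  · have hgw : g w = 0 := self_eq_neg.1 (hzw.symm.trans (hodd w))
    simpa [hgw] using hsq hw

theorem norm_deriv_dslope_le_two_of_injOn (hf : DifferentiableOn ℂ f (ball 0 1))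
    (hf' : deriv f 0 = 1) (hinj : InjOn f (ball 0 1)) : ‖deriv (dslope f 0) 0‖ ≤ 2 := by
  set φ := dslope f 0
  have h0 : (0 : ℂ) ∈ ball 0 1 := mem_ball_self one_pos
  have hφ : DifferentiableOn ℂ φ (ball 0 1) := differentiableOn_dslope_ball one_pos hf
  have hφ0 : φ 0 = 1 := (dslope_same f 0).trans hf'
  obtain ⟨s, hs, hs0, hsφ⟩ := exists_sq_mul_eq_one one_pos hφ (fun z hz ↦
    dslope_zero_ne_zero_of_injOn hinj h0 (by simp [hf']) hz) hφ0
  have hφ' : deriv φ 0 = -2 * deriv s 0 := by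
    have hball : ball (0 : ℂ) 1 ∈ 𝓝 0 := isOpen_ball.mem_nhds h0
    have hprod := ((hs.hasDerivAt hball).pow 2).mul (hφ.hasDerivAt hball)
    have hconst : HasDerivAt (s ^ 2 * φ) 0 0 := (hasDerivAt_const 0 (1 : ℂ)).congr_of_eventuallyEq
      (by filter_upwards [hball] with z hz using hsφ z hz)
    have := hprod.unique hconst
    simp only [Nat.cast_ofNat, hs0, Nat.add_one_sub_one, one_pow, mul_one, hφ0, Pi.pow_apply,
      one_mul] at this
    linear_combination this
  have hm : DifferentiableOn ℂ (fun z ↦ dslope s 0 (z ^ 2)) (ball 0 1) :=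
    (differentiableOn_dslope_ball one_pos hs).comp (by fun_prop) mapsTo_sq_unitBall
  have hderiv : HasDerivAt (fun z ↦ z * dslope s 0 (z ^ 2)) (deriv s 0) 0 := by
    simpa using (hasDerivAt_id' (0 : ℂ)).fun_mul (hm.hasDerivAt (isOpen_ball.mem_nhds h0))
  have harea := norm_deriv_mul_sq_le_one_of_injOn_inv_add one_pos (differentiableOn_id.fun_mul hm)
    (injOn_inv_add_mul_dslope_sq hinj hs0 hsφ)
  simp only [hderiv.deriv, one_pow, mul_one] at harea
  rw [hφ', norm_mul, norm_neg, norm_ofNat]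
  linarith

lemma hasFPowerSeriesOnBall_ofScalars_of_hasSum {a : ℕ → ℂ}
    (hf : ∀ z ∈ ball 0 1, HasSum (fun k ↦ a k * z ^ k) (f z)) :
    HasFPowerSeriesOnBall f (FormalMultilinearSeries.ofScalars ℂ a) 0 1 := by
  refine ⟨ENNReal.le_of_forall_nnreal_lt fun r hr ↦ ?_, one_pos, fun {z} hz ↦ ?_⟩
  · have hr1 : (r : ℝ) < 1 := mod_cast hr
    have hterm := (hf r (by simpa using hr1)).summable.tendsto_atTop_zero.norm
    exact FormalMultilinearSeries.le_radius_of_tendsto (l := 0) _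
      (by simpa [FormalMultilinearSeries.ofScalars_norm] using hterm)
  · have hz1 : z ∈ ball 0 1 := by simpa [← ofReal_norm] using hz
    simpa [FormalMultilinearSeries.ofScalars_apply_eq, mul_comm] using hf z hz1

lemma iterate_dslope_eq_coeff {p : FormalMultilinearSeries ℂ ℂ ℂ} (hf : HasFPowerSeriesAt f p 0)
    (n : ℕ) : (Function.swap dslope 0)^[n] f 0 = p.coeff n := by
  rw [← (hf.has_fpower_series_iterate_dslope_fslope n).coeff_zero 1,
    ← FormalMultilinearSeries.coeff, FormalMultilinearSeries.coeff_iterate_fslope, zero_add]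

end Univalent

theorem zalcman_univalent_real_coeffs_a2_a3_general (f : ℂ → ℂ) (a : ℕ → ℂ) (ha1 : a 1 = 1)
    (hf : ∀ z ∈ ball 0 1, HasSum (fun k ↦ a k * z ^ k) (f z)) (hinj : InjOn f (ball 0 1))
    (lam : ℂ) : ‖lam * a 2 ^ 2 - a 3‖ ≤ 1 + 4 * ‖lam - 1‖ := by
  have hps := hasFPowerSeriesOnBall_ofScalars_of_hasSum hf
  have hdiff : DifferentiableOn ℂ f (ball 0 1) := by
    simpa [← eball_ofReal] using hps.differentiableOn
  have hcoeff (n : ℕ) : (Function.swap dslope 0)^[n] f 0 = a n :=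
    (iterate_dslope_eq_coeff hps.hasFPowerSeriesAt n).trans
      FormalMultilinearSeries.coeff_ofScalars
  have h1 : deriv f 0 = 1 := by rw [← dslope_same, ← ha1, ← hcoeff 1]; rfl
  have h2 : deriv (dslope f 0) 0 = a 2 := by rw [← dslope_same, ← hcoeff 2]; rfl
  have h3 : deriv (dslope (dslope f 0) 0) 0 = a 3 := by rw [← dslope_same, ← hcoeff 3]; rfl
  have hdet : ‖a 2 ^ 2 - a 3‖ ≤ 1 :=
    h2 ▸ h3 ▸ norm_deriv_dslope_sq_sub_le_one_of_injOn hdiff h1 hinj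
  have ha2 : ‖a 2‖ ≤ 2 := h2 ▸ norm_deriv_dslope_le_two_of_injOn hdiff h1 hinj
  calc ‖lam * a 2 ^ 2 - a 3‖ = ‖(a 2 ^ 2 - a 3) + a 2 ^ 2 * (lam - 1)‖ := by ring_nf
    _ ≤ ‖a 2 ^ 2 - a 3‖ + ‖a 2‖ ^ 2 * ‖lam - 1‖ := by
        rw [← norm_pow, ← norm_mul]
        exact norm_add_le _ _
    _ ≤ 1 + 2 ^ 2 * ‖lam - 1‖ := by gcongr
    _ = 1 + 4 * ‖lam - 1‖ := by norm_num

theorem zalcman_univalent_real_coeffs_a2_a3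
    (f : ℂ → ℂ) (a : ℕ → ℝ)
    (ha0 : a 0 = 0) (ha1 : a 1 = 1)
    (hf : ∀ z ∈ Metric.ball (0 : ℂ) 1, HasSum (fun k => (a k : ℂ) * z ^ k) (f z))
    (hinj : Set.InjOn f (Metric.ball (0 : ℂ) 1))
    (lam : ℝ) (hlam : 1 ≤ lam) :
    |lam * a 2 ^ 2 - a 3| ≤ 4 * lam - 3 := by
  have h := zalcman_univalent_real_coeffs_a2_a3_general f (fun k ↦ a k) (by simp [ha1]) hf hinj lam
  norm_cast at h
  rw [Real.norm_eq_abs, Real.norm_of_nonneg (sub_nonneg.2 hlam)] at h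
  linarith
end

section
/- Fix a real number β < 1 and for n ≥ 2 set B_n = (1 + 2(n−1)(1−β))/n. Let f(z) = z + Σ_{n≥2} a_n zⁿ be analytic on the open unit disc 𝔻 with Re((1−z)f′(z)) > β for all z ∈ 𝔻. Then for all integers n, m ≥ 2 and every real μ with μ ≥ max{nm/((n+m−1)(1−β)), nm/(n+m−1)}, one has |μ a_n a_m − a_{n+m−1}| ≤ μ B_n B_m − B_{n+m−1}. -/
/-!
Dividing `(1 - z) f′(z) - β` by `1 - β` gives a Carathéodory function `∑ cₖ zᵏ`, and comparing
coefficients yields `n aₙ = 1 + (1 - β) (c₁ + ⋯ + cₙ₋₁)`. By Herglotz, `cₖ = 2 ∫ ζ⁻ᵏ dν` for a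
probability measure `ν` on the circle. Since `g ↦ g - 2 ∫ g dν` is an isometry of `L²(ν)`,
Cauchy–Schwarz gives Livingston's inequality `|cᵢ₊ₖ - cᵢ cₖ| ≤ 2`. With `γ = 1 - β` and
`Sₙ = c₁ + ⋯ + cₙ`, the functional `s (1 + γ Sᵢ) (1 + γ Sⱼ) - (1 + γ Sᵢ₊ⱼ)` is a combination, with
nonnegative weights as soon as `s ≥ 1` and `s γ ≥ 1`, of quantities that are all extremal for
`cₖ = 2`.
-/

open Finset MeasureTheory Metric Real Filter Topology
open scoped RealInnerProductSpace ComplexConjugate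

section Reflection

variable {Ω : Type*} [MeasurableSpace Ω] {μ : Measure Ω} [IsProbabilityMeasure μ]

lemma integral_norm_sub_two_smul_integral_sq {E : Type*} [NormedAddCommGroup E]
    [InnerProductSpace ℝ E] [CompleteSpace E] {g : Ω → E} (hg : MemLp g 2 μ) :
    ∫ ω, ‖g ω - (2 : ℝ) • ∫ x, g x ∂μ‖ ^ 2 ∂μ = ∫ ω, ‖g ω‖ ^ 2 ∂μ := by
  set m := ∫ x, g x ∂μ
  have hg_int : Integrable g μ := hg.integrable one_le_two
  have hg_sq : Integrable (fun ω => ‖g ω‖ ^ 2) μ := hg.integrable_norm_pow two_ne_zero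
  have hinner_int : Integrable (fun ω => ⟪m, g ω⟫) μ := hg_int.const_inner m
  have hinner : ∫ ω, ⟪m, g ω⟫ ∂μ = ‖m‖ ^ 2 := by
    rw [integral_inner hg_int, real_inner_self_eq_norm_sq]
  have hexpand (ω : Ω) :
      ‖g ω - (2 : ℝ) • m‖ ^ 2 = ‖g ω‖ ^ 2 - 4 * ⟪m, g ω⟫ + 4 * ‖m‖ ^ 2 := by
    rw [norm_sub_sq_real, real_inner_smul_right, real_inner_comm, norm_smul, Real.norm_two]
    ring
  simp_rw [hexpand]
  rw [integral_add (by fun_prop) (integrable_const _), integral_sub hg_sq (hinner_int.const_mul 4),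
    integral_const_mul, hinner, integral_const, probReal_univ, one_smul]
  ring

lemma norm_integral_mul_sub_two_mul_integral_mul_integral_le_one {f g : Ω → ℂ}
    (hf : AEStronglyMeasurable f μ) (hg : AEStronglyMeasurable g μ)
    (hf1 : ∀ᵐ ω ∂μ, ‖f ω‖ ≤ 1) (hg1 : ∀ᵐ ω ∂μ, ‖g ω‖ ≤ 1) :
    ‖∫ ω, f ω * g ω ∂μ - 2 * (∫ ω, f ω ∂μ) * ∫ ω, g ω ∂μ‖ ≤ 1 := by
  set m := ∫ ω, g ω ∂μ
  have hg_lp : MemLp g 2 μ := .of_bound hg 1 hg1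
  have hf_int : Integrable f μ := .of_bound hf 1 hf1
  have hfg_int : Integrable (fun ω => f ω * g ω) μ :=
    (hg_lp.integrable one_le_two).bdd_mul hf hf1
  have hrefl_lp : MemLp (fun ω => g ω - (2 : ℝ) • m) 2 μ := hg_lp.sub (memLp_const _)
  have hrefl_sq : Integrable (fun ω => ‖g ω - (2 : ℝ) • m‖ ^ 2) μ :=
    hrefl_lp.integrable_norm_pow two_ne_zero
  have hsq_le : ∫ ω, ‖g ω - (2 : ℝ) • m‖ ^ 2 ∂μ ≤ 1 := by
    rw [integral_norm_sub_two_smul_integral_sq hg_lp]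
    calc ∫ ω, ‖g ω‖ ^ 2 ∂μ ≤ ∫ _, (1 : ℝ) ∂μ :=
          integral_mono_ae (hg_lp.integrable_norm_pow two_ne_zero) (integrable_const _)
            (hg1.mono fun ω hω => pow_le_one₀ (norm_nonneg _) hω)
      _ = 1 := by simp
  have hpointwise : ∀ᵐ ω ∂μ,
      ‖f ω * (g ω - (2 : ℝ) • m)‖ ≤ (1 + ‖g ω - (2 : ℝ) • m‖ ^ 2) / 2 := by
    filter_upwards [hf1] with ω hω
    rw [norm_mul]
    nlinarith [sq_nonneg (‖g ω - (2 : ℝ) • m‖ - 1),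
      mul_le_of_le_one_left (norm_nonneg (g ω - (2 : ℝ) • m)) hω]
  calc ‖∫ ω, f ω * g ω ∂μ - 2 * (∫ ω, f ω ∂μ) * m‖
      = ‖∫ ω, f ω * (g ω - (2 : ℝ) • m) ∂μ‖ := by
        simp_rw [mul_sub]
        rw [integral_sub hfg_int (hf_int.mul_const _), integral_mul_const, Complex.real_smul]
        congr 2
        push_cast
        ring
    _ ≤ ∫ ω, (1 + ‖g ω - (2 : ℝ) • m‖ ^ 2) / 2 ∂μ :=
        norm_integral_le_of_norm_le (((integrable_const 1).add hrefl_sq).div_const 2)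
          hpointwise
    _ = (1 + ∫ ω, ‖g ω - (2 : ℝ) • m‖ ^ 2 ∂μ) / 2 := by
        rw [integral_div, integral_add (integrable_const 1) hrefl_sq]; simp
    _ ≤ 1 := by linarith

end Reflection

-- `Circle` carries no `MeasurableSpace` instance.
local notation "𝕋" => sphere (0 : ℂ) 1

lemma exists_probabilityMeasure_integral_eq_circleAverage {E : Type*}
    [NormedAddCommGroup E] [NormedSpace ℝ E] {w : ℂ → ℝ}
    (hw : CircleIntegrable w 0 1) (hw_nonneg : ∀ z ∈ 𝕋, 0 ≤ w z)
    (hw_avg : circleAverage w 0 1 = 1) :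
    ∃ ν : ProbabilityMeasure 𝕋, ∀ F : ℂ → E, ContinuousOn F 𝕋 →
      ∫ ζ, F ζ ∂(ν : Measure 𝕋) = circleAverage (fun z => w z • F z) 0 1 := by
  set arc : Measure ℝ := volume.restrict (Set.Ioc 0 (2 * π))
  set ρ : ℝ → ℝ := fun θ => (2 * π)⁻¹ * w (circleMap 0 1 θ)
  set e : ℝ → 𝕋 := fun θ => ⟨circleMap 0 1 θ, circleMap_mem_sphere 0 zero_le_one θ⟩
  have he : AEMeasurable e (arc.withDensity fun θ => ENNReal.ofReal (ρ θ)) :=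
    ((continuous_circleMap 0 1).subtype_mk _).aemeasurable
  have hρ_nonneg (θ : ℝ) : 0 ≤ ρ θ := mul_nonneg (by positivity) (hw_nonneg _ (e θ).2)
  have hρ_int : Integrable ρ arc :=
    ((intervalIntegrable_iff_integrableOn_Ioc_of_le two_pi_pos.le).mp hw).const_mul _
  have hρ_mass : ∫ θ, ρ θ ∂arc = 1 := by
    rw [← hw_avg, circleAverage_def, intervalIntegral.integral_of_le two_pi_pos.le,
      integral_const_mul, smul_eq_mul]
  have hρ_prob : IsProbabilityMeasure (arc.withDensity fun θ => ENNReal.ofReal (ρ θ)) := by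
    constructor
    rw [withDensity_apply _ .univ, setLIntegral_univ,
      ← ofReal_integral_eq_lintegral_ofReal hρ_int (.of_forall hρ_nonneg), hρ_mass,
      ENNReal.ofReal_one]
  refine ⟨⟨_, Measure.isProbabilityMeasure_map he⟩, fun F hF => ?_⟩
  rw [ProbabilityMeasure.coe_mk,
    integral_map he (f := fun ζ => F ζ) hF.domRestrict.aestronglyMeasurable,
    integral_withDensity_eq_integral_toReal_smul₀ hρ_int.aemeasurable.ennreal_ofReal
      (.of_forall fun _ => ENNReal.ofReal_lt_top),
    circleAverage_def, intervalIntegral.integral_of_le two_pi_pos.le, ← integral_smul]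
  simp only [e, ρ, arc, ENNReal.toReal_ofReal (hρ_nonneg _), mul_smul]

section Coefficients

variable {p : ℂ → ℂ} {c : ℕ → ℂ}

open FormalMultilinearSeries in
lemma hasFPowerSeriesOnBall_ofScalars_of_hasSum_s11
    (hp : ∀ z ∈ ball (0 : ℂ) 1, HasSum (fun k => c k * z ^ k) (p z)) :
    HasFPowerSeriesOnBall p (ofScalars ℂ c) 0 1 where
  r_le := by
    refine ENNReal.le_of_forall_nnreal_lt fun r hr => le_radius_of_summable_norm _ ?_
    have hr_mem : ((r : ℝ) : ℂ) ∈ ball (0 : ℂ) 1 := by simpa using hr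
    simpa [ofScalars_norm] using (hp _ hr_mem).summable.norm
  r_pos := one_pos
  hasSum {z} hz := by
    have hz_mem : z ∈ ball (0 : ℂ) 1 := by simpa [← Metric.eball_ofReal] using hz
    simpa [ofScalars_apply_eq, mul_comm] using hp z hz_mem

lemma circleAverage_inv_pow_mul_eq_coeff {r : ℝ} (hr : 0 < r) {q : FormalMultilinearSeries ℂ ℂ ℂ}
    (hp : DiffContOnCl ℂ p (ball 0 r)) (hq : HasFPowerSeriesAt p q 0) (k : ℕ) :
    circleAverage (fun z => z⁻¹ ^ k * p z) 0 r = q.coeff k := by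
  lift r to NNReal using hr.le
  rw [hq.eq_formalMultilinearSeries (hp.hasFPowerSeriesOnBall (mod_cast hr)).hasFPowerSeriesAt,
    FormalMultilinearSeries.coeff, circleAverage_eq_circleIntegral hr.ne']
  change _ = cauchyPowerSeries p 0 r k fun _ => 1
  rw [cauchyPowerSeries_apply]
  simp only [sub_zero, one_div, smul_eq_mul, mul_left_comm]

lemma circleAverage_inv_pow_mul_conj_eq_zero (hp : DiffContOnCl ℂ p (ball 0 1)) {k : ℕ}
    (hk : k ≠ 0) : circleAverage (fun z => z⁻¹ ^ k * conj (p z)) 0 1 = 0 := by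
  have hdiff : DiffContOnCl ℂ (fun z => z ^ k * p z) (ball 0 1) :=
    (differentiable_id.pow k).diffContOnCl.smul hp
  have hmean : circleAverage (fun z => z ^ k * p z) 0 1 = 0 := by
    rw [DiffContOnCl.circleAverage (by rwa [abs_one]), zero_pow hk, zero_mul]
  have hint : CircleIntegrable (fun z => z ^ k * p z) 0 1 :=
    (hdiff.continuousOn_ball.mono sphere_subset_closedBall).circleIntegrable zero_le_one
  calc circleAverage (fun z => z⁻¹ ^ k * conj (p z)) 0 1
      = circleAverage (Complex.conjCLE ∘ fun z => z ^ k * p z) 0 1 := by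
        refine circleAverage_congr_sphere fun z hz => ?_
        have hz1 : ‖z‖ = 1 := by simpa using hz
        simp [Complex.inv_eq_conj hz1]
    _ = 0 := by
        rw [← ContinuousLinearEquiv.coe_coe, ContinuousLinearMap.circleAverage_comp_comm _ hint,
          hmean, map_zero]

lemma exists_probabilityMeasure_two_mul_integral_inv_pow_eq_coeff
    (hp : DiffContOnCl ℂ p (ball 0 1)) (hp0 : p 0 = 1) (hre : ∀ z ∈ 𝕋, 0 ≤ (p z).re)
    {q : FormalMultilinearSeries ℂ ℂ ℂ} (hq : HasFPowerSeriesAt p q 0) :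
    ∃ ν : ProbabilityMeasure 𝕋, ∀ k ≠ 0,
      2 * ∫ ζ, (ζ : ℂ)⁻¹ ^ k ∂(ν : Measure 𝕋) = q.coeff k := by
  have hp_cont : ContinuousOn p 𝕋 := hp.continuousOn_ball.mono sphere_subset_closedBall
  have hp_int : CircleIntegrable p 0 1 := hp_cont.circleIntegrable zero_le_one
  have hre_int : CircleIntegrable (fun z => (p z).re) 0 1 :=
    (Complex.continuous_re.comp_continuousOn hp_cont).circleIntegrable zero_le_one
  have hre_avg : circleAverage (fun z => (p z).re) 0 1 = 1 := by
    rw [show (fun z => (p z).re) = Complex.reCLM ∘ p from rfl,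
      Complex.reCLM.circleAverage_comp_comm hp_int,
      DiffContOnCl.circleAverage (by rwa [abs_one]), hp0, Complex.reCLM_apply, Complex.one_re]
  obtain ⟨ν, hν⟩ := exists_probabilityMeasure_integral_eq_circleAverage (E := ℂ) hre_int hre hre_avg
  refine ⟨ν, fun k hk => ?_⟩
  have hinv : ContinuousOn (fun z : ℂ => z⁻¹ ^ k) 𝕋 :=
    (continuousOn_inv₀.mono fun z hz => ne_of_mem_sphere hz one_ne_zero).pow k
  have hinv_mul_int : CircleIntegrable (fun z => z⁻¹ ^ k * p z) 0 1 :=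
    (hinv.mul hp_cont).circleIntegrable zero_le_one
  have hinv_mul_conj_int : CircleIntegrable (fun z => z⁻¹ ^ k * conj (p z)) 0 1 :=
    (hinv.mul (Complex.continuous_conj.comp_continuousOn hp_cont)).circleIntegrable zero_le_one
  calc 2 * ∫ ζ, (ζ : ℂ)⁻¹ ^ k ∂(ν : Measure 𝕋)
      = circleAverage (fun z => (2 : ℂ) • ((p z).re • z⁻¹ ^ k)) 0 1 := by
        rw [hν _ hinv, circleAverage_fun_smul, smul_eq_mul]
    _ = circleAverage (fun z => z⁻¹ ^ k * p z + z⁻¹ ^ k * conj (p z)) 0 1 := by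
        congr 1
        ext z
        rw [Complex.real_smul, smul_eq_mul, Complex.re_eq_add_conj]
        ring
    _ = q.coeff k := by
        rw [circleAverage_fun_add hinv_mul_int hinv_mul_conj_int,
          circleAverage_inv_pow_mul_eq_coeff one_pos hp hq,
          circleAverage_inv_pow_mul_conj_eq_zero hp hk, add_zero]

end Coefficients

lemma norm_ofReal_mul_le {x b : ℝ} {w : ℂ} (hx : 0 ≤ x) (hw : ‖w‖ ≤ b) :
    ‖(x : ℂ) * w‖ ≤ x * b := by
  rw [norm_mul, Complex.norm_of_nonneg hx]
  exact mul_le_mul_of_nonneg_left hw hx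

/-- The Carathéodory class: `p` is analytic on the unit disc with `p 0 = 1` and nonnegative real
part. Analyticity is recorded by the Taylor coefficients `c` of `p`, and `p 0 = 1` as `c 0 = 1`. -/
structure IsCaratheodory (p : ℂ → ℂ) (c : ℕ → ℂ) : Prop where
  coeff_zero : c 0 = 1
  hasSum : ∀ z ∈ ball (0 : ℂ) 1, HasSum (fun k => c k * z ^ k) (p z)
  re_nonneg : ∀ z ∈ ball (0 : ℂ) 1, 0 ≤ (p z).re

namespace IsCaratheodory

variable {p : ℂ → ℂ} {c : ℕ → ℂ}

lemma exists_measure_dilation (h : IsCaratheodory p c) {r : ℝ} (hr : r ∈ Set.Ioo 0 1) :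
    ∃ ν : ProbabilityMeasure 𝕋, ∀ k ≠ 0,
      2 * ∫ ζ, (ζ : ℂ)⁻¹ ^ k ∂(ν : Measure 𝕋) = c k * r ^ k := by
  have hmaps : Set.MapsTo (fun z : ℂ => r * z) (closedBall 0 1) (ball 0 1) := fun z hz => by
    rw [mem_closedBall_zero_iff] at hz
    rw [mem_ball_zero_iff, norm_mul, Complex.norm_of_nonneg hr.1.le]
    exact (mul_le_of_le_one_right hr.1.le hz).trans_lt hr.2
  have hp_diff : DifferentiableOn ℂ p (ball 0 1) := by
    simpa [← Metric.eball_ofReal] using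
      (hasFPowerSeriesOnBall_ofScalars_of_hasSum_s11 h.hasSum).differentiableOn
  have hdil_diff : DiffContOnCl ℂ (fun z => p (r * z)) (ball 0 1) :=
    ((hp_diff.comp (by fun_prop) hmaps).mono closure_ball_subset_closedBall).diffContOnCl
  have hdil_sum (z : ℂ) (hz : z ∈ ball (0 : ℂ) 1) :
      HasSum (fun k => c k * r ^ k * z ^ k) (p (r * z)) := by
    simpa only [mul_pow, mul_assoc] using h.hasSum _ (hmaps (ball_subset_closedBall hz))
  have hdil_zero : p (r * 0) = 1 := by
    have := (h.hasSum 0 (mem_ball_self one_pos)).unique (hasSum_single 0 (by simp +contextual))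
    simpa [h.coeff_zero] using this
  simpa only [FormalMultilinearSeries.coeff_ofScalars] using
    exists_probabilityMeasure_two_mul_integral_inv_pow_eq_coeff hdil_diff hdil_zero
      (fun z hz => h.re_nonneg _ (hmaps (sphere_subset_closedBall hz)))
      (hasFPowerSeriesOnBall_ofScalars_of_hasSum_s11 hdil_sum).hasFPowerSeriesAt

theorem exists_measure (h : IsCaratheodory p c) :
    ∃ ν : ProbabilityMeasure 𝕋, ∀ k ≠ 0,
      2 * ∫ ζ, (ζ : ℂ)⁻¹ ^ k ∂(ν : Measure 𝕋) = c k := by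
  obtain ⟨r, -, hr_mem, hr_lim⟩ := exists_seq_strictMono_tendsto' (zero_lt_one (α := ℝ))
  choose ν hν using fun n => h.exists_measure_dilation (hr_mem n)
  obtain ⟨ν₁, φ, hφ, hν₁⟩ := CompactSpace.tendsto_subseq ν
  refine ⟨ν₁, fun k hk => ?_⟩
  have hinv : Continuous fun ζ : 𝕋 => (ζ : ℂ)⁻¹ ^ k :=
    (continuous_subtype_val.inv₀ fun ζ => ne_of_mem_sphere ζ.2 one_ne_zero).pow k
  have hmoment : Tendsto (fun n => 2 * ∫ ζ, (ζ : ℂ)⁻¹ ^ k ∂(ν (φ n) : Measure 𝕋)) atTop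
      (𝓝 (2 * ∫ ζ, (ζ : ℂ)⁻¹ ^ k ∂(ν₁ : Measure 𝕋))) :=
    ((ProbabilityMeasure.tendsto_iff_forall_integral_rclike_tendsto ℂ).mp hν₁
      (.mkOfCompact ⟨_, hinv⟩)).const_mul 2
  have hcoeff : Tendsto (fun n => c k * (r (φ n) : ℂ) ^ k) atTop (𝓝 (c k)) := by
    have hcont : Continuous fun x : ℝ => c k * (x : ℂ) ^ k := by fun_prop
    have hlim := (hcont.tendsto 1).comp (hr_lim.comp hφ.tendsto_atTop)
    simpa [Function.comp_def] using hlim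
  simp_rw [hν _ k hk] at hmoment
  exact tendsto_nhds_unique hmoment hcoeff

theorem norm_coeff_le_two (h : IsCaratheodory p c) {k : ℕ} (hk : k ≠ 0) : ‖c k‖ ≤ 2 := by
  obtain ⟨ν, hν⟩ := h.exists_measure
  have hmoment : ‖∫ ζ, (ζ : ℂ)⁻¹ ^ k ∂(ν : Measure 𝕋)‖ ≤ 1 := by
    simpa using norm_integral_le_of_norm_le_const (μ := (ν : Measure 𝕋))
      (f := fun ζ => (ζ : ℂ)⁻¹ ^ k) (C := 1) (.of_forall fun ζ => by simp)
  rw [← hν k hk, norm_mul, Complex.norm_two]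
  linarith

theorem norm_coeff_add_sub_mul_le_two (h : IsCaratheodory p c) {i k : ℕ} (hi : i ≠ 0)
    (hk : k ≠ 0) : ‖c (i + k) - c i * c k‖ ≤ 2 := by
  obtain ⟨ν, hν⟩ := h.exists_measure
  have hmeas (l : ℕ) : AEStronglyMeasurable (fun ζ : 𝕋 => (ζ : ℂ)⁻¹ ^ l) (ν : Measure 𝕋) := by
    fun_prop
  have hnorm (l : ℕ) : ∀ᵐ ζ : 𝕋 ∂(ν : Measure 𝕋), ‖(ζ : ℂ)⁻¹ ^ l‖ ≤ 1 :=
    .of_forall fun ζ => by simp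
  have hbound := norm_integral_mul_sub_two_mul_integral_mul_integral_le_one
    (hmeas i) (hmeas k) (hnorm i) (hnorm k)
  simp_rw [← pow_add] at hbound
  set M : ℕ → ℂ := fun l => ∫ ζ, (ζ : ℂ)⁻¹ ^ l ∂(ν : Measure 𝕋)
  have hM (l : ℕ) (hl : l ≠ 0) : c l = 2 * M l := (hν l hl).symm
  calc ‖c (i + k) - c i * c k‖ = ‖2 * (M (i + k) - 2 * M i * M k)‖ := by
        rw [hM _ (by lia), hM i hi, hM k hk]
        ring_nf
    _ = 2 * ‖M (i + k) - 2 * M i * M k‖ := by rw [norm_mul, Complex.norm_two]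
    _ ≤ 2 := by linarith

theorem norm_real_mul_mul_sub_coeff_add_le (h : IsCaratheodory p c) {i k : ℕ} (hi : i ≠ 0)
    (hk : k ≠ 0) {t : ℝ} (ht : 1 ≤ t) : ‖t * (c i * c k) - c (i + k)‖ ≤ 4 * t - 2 := by
  have hprod : ‖c i * c k‖ ≤ 2 * 2 :=
    norm_mul_le_of_le (h.norm_coeff_le_two hi) (h.norm_coeff_le_two hk)
  calc ‖t * (c i * c k) - c (i + k)‖
      = ‖((t - 1 : ℝ) : ℂ) * (c i * c k) - (c (i + k) - c i * c k)‖ := by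
        congr 1
        push_cast
        ring
    _ ≤ (t - 1) * (2 * 2) + 2 :=
        norm_sub_le_of_le (norm_ofReal_mul_le (sub_nonneg.mpr ht) hprod)
          (h.norm_coeff_add_sub_mul_le_two hi hk)
    _ = 4 * t - 2 := by ring

lemma norm_sum_coeff_le (h : IsCaratheodory p c) (n : ℕ) :
    ‖∑ k ∈ range n, c (k + 1)‖ ≤ 2 * n := by
  simpa [mul_comm] using
    norm_sum_le_of_le (range n) fun k _ => h.norm_coeff_le_two k.succ_ne_zero

lemma norm_sum_real_mul_mul_sub_coeff_add_le (h : IsCaratheodory p c) {i : ℕ} (hi : i ≠ 0) (j : ℕ)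
    {t : ℝ} (ht : 1 ≤ t) :
    ‖∑ k ∈ range j, (t * (c i * c (k + 1)) - c (i + (k + 1)))‖ ≤ (4 * t - 2) * j := by
  refine (norm_sum_le_of_le (range j) fun k _ =>
    h.norm_real_mul_mul_sub_coeff_add_le hi k.succ_ne_zero ht).trans_eq ?_
  rw [sum_const, card_range, nsmul_eq_mul, mul_comm]

theorem norm_mul_partialSum_sub_partialSum_add_le (h : IsCaratheodory p c) {s γ : ℝ} (hs : 1 ≤ s)
    (hsγ : 1 ≤ s * γ) (i j : ℕ) :
    ‖s * ((1 + γ * ∑ k ∈ range (i + 1), c (k + 1)) * (1 + γ * ∑ k ∈ range j, c (k + 1)))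
        - (1 + γ * ∑ k ∈ range (i + 1 + j), c (k + 1))‖
      ≤ s * ((1 + 2 * γ * (i + 1)) * (1 + 2 * γ * j)) - (1 + 2 * γ * (i + 1 + j)) := by
  have hγ : 0 < γ := pos_of_mul_pos_right (by linarith) (zero_le_one.trans hs)
  set S : ℕ → ℂ := fun n => ∑ k ∈ range n, c (k + 1)
  set T : ℂ := ∑ k ∈ range j, (((s * γ : ℝ) : ℂ) * (c (i + 1) * c (k + 1)) - c (i + 1 + (k + 1)))
  have hS_succ : S (i + 1) = S i + c (i + 1) := sum_range_succ _ _
  have hS_add : S (i + 1 + j) = S (i + 1) + ∑ k ∈ range j, c (i + 1 + (k + 1)) :=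
    sum_range_add _ _ _
  have hT : T = ((s * γ : ℝ) : ℂ) * (c (i + 1) * S j) - (S (i + 1 + j) - S (i + 1)) := by
    rw [hS_add, add_sub_cancel_left]
    simp only [T, S, sum_sub_distrib, ← mul_sum]
  have hS (n : ℕ) : ‖S n‖ ≤ 2 * n := h.norm_sum_coeff_le n
  -- Only the top coefficient of `S (i + 1)` is paired with `S j` against `S (i + 1 + j)`, so that
  -- the remainder `T` falls under Livingston's inequality.
  calc ‖s * ((1 + γ * S (i + 1)) * (1 + γ * S j)) - (1 + γ * S (i + 1 + j))‖
      = ‖((s - 1 : ℝ) : ℂ) * 1 + ((γ * (s - 1) : ℝ) : ℂ) * S (i + 1) + ((s * γ : ℝ) : ℂ) * S j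
          + ((s * γ ^ 2 : ℝ) : ℂ) * (S i * S j) + γ * T‖ := by
        rw [hT, hS_succ]
        congr 1
        push_cast
        ring
    _ ≤ (s - 1) * 1 + γ * (s - 1) * (2 * (i + 1 : ℕ)) + s * γ * (2 * j)
          + s * γ ^ 2 * (2 * i * (2 * j)) + γ * ((4 * (s * γ) - 2) * j) := by
        have hs' : 0 ≤ s - 1 := sub_nonneg.mpr hs
        refine norm_add_le_of_le (norm_add_le_of_le (norm_add_le_of_le (norm_add_le_of_le
          (norm_ofReal_mul_le hs' norm_one.le) (norm_ofReal_mul_le (by positivity) (hS _)))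
          (norm_ofReal_mul_le (by linarith) (hS j)))
          (norm_ofReal_mul_le (by positivity) (norm_mul_le_of_le (hS i) (hS j))))
          (norm_ofReal_mul_le hγ.le ?_)
        exact h.norm_sum_real_mul_mul_sub_coeff_add_le i.succ_ne_zero j hsγ
    _ = s * ((1 + 2 * γ * (i + 1)) * (1 + 2 * γ * j)) - (1 + 2 * γ * (i + 1 + j)) := by
        push_cast
        ring

end IsCaratheodory

section Derivative

variable {f : ℂ → ℂ} {a : ℕ → ℂ}

lemma hasSum_deriv_of_hasSum
    (hf : ∀ z ∈ ball (0 : ℂ) 1, HasSum (fun k => a k * z ^ k) (f z)) {z : ℂ}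
    (hz : z ∈ ball (0 : ℂ) 1) :
    HasSum (fun k : ℕ => (k + 1) * a (k + 1) * z ^ k) (deriv f z) := by
  have hz_mem : z ∈ Metric.eball (0 : ℂ) 1 := by simpa [← Metric.eball_ofReal] using hz
  have hfderiv := (hasFPowerSeriesOnBall_ofScalars_of_hasSum_s11 hf).fderiv.hasSum hz_mem
  have happly := hfderiv.mapL (ContinuousLinearMap.apply ℂ ℂ (1 : ℂ))
  simpa [FormalMultilinearSeries.apply_eq_pow_smul_coeff, mul_comm, mul_left_comm] using happly

lemma hasSum_one_sub_mul_deriv_of_hasSum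
    (hf : ∀ z ∈ ball (0 : ℂ) 1, HasSum (fun k => a k * z ^ k) (f z)) {z : ℂ}
    (hz : z ∈ ball (0 : ℂ) 1) :
    HasSum (fun k : ℕ => ((k + 1) * a (k + 1) - k * a k) * z ^ k) ((1 - z) * deriv f z) := by
  have hderiv := hasSum_deriv_of_hasSum hf hz
  have hshift : HasSum (fun k : ℕ => k * a k * z ^ k) (z * deriv f z) := by
    rw [← hasSum_nat_add_iff' 1]
    simpa [pow_succ', mul_left_comm] using hderiv.mul_left z
  simpa only [sub_mul, one_mul] using hderiv.sub hshift

lemma isCaratheodory_one_sub_mul_deriv {β : ℝ} (hβ : β < 1)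
    (ha1 : a 1 = 1) (hf : ∀ z ∈ ball (0 : ℂ) 1, HasSum (fun k => a k * z ^ k) (f z))
    (hre : ∀ z ∈ ball (0 : ℂ) 1, β ≤ ((1 - z) * deriv f z).re) :
    IsCaratheodory (fun z => ((1 - z) * deriv f z - β) / (1 - β : ℝ))
      (fun k => ((k + 1) * a (k + 1) - k * a k - if k = 0 then (β : ℂ) else 0) / (1 - β : ℝ)) where
  coeff_zero := by
    have hβ' : (1 : ℂ) - β ≠ 0 := by exact_mod_cast (sub_pos.mpr hβ).ne'
    simp [ha1, div_self hβ']
  hasSum z hz := by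
    have hsub := (hasSum_one_sub_mul_deriv_of_hasSum hf hz).sub (hasSum_ite_eq 0 (β : ℂ))
    refine (hsub.div_const ((1 - β : ℝ) : ℂ)).congr_fun ?_
    rintro (_ | k)
    · simp
    · simp [div_mul_eq_mul_div]
  re_nonneg z hz := by
    rw [Complex.div_ofReal_re, Complex.sub_re, Complex.ofReal_re]
    exact div_nonneg (sub_nonneg.mpr (hre z hz)) (sub_pos.mpr hβ).le

lemma exists_isCaratheodory_coeff_eq_partialSum {β : ℝ} (hβ : β < 1)
    (ha1 : a 1 = 1) (hf : ∀ z ∈ ball (0 : ℂ) 1, HasSum (fun k => a k * z ^ k) (f z))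
    (hre : ∀ z ∈ ball (0 : ℂ) 1, β ≤ ((1 - z) * deriv f z).re) :
    ∃ p c, IsCaratheodory p c ∧
      ∀ j : ℕ, (j + 1 : ℕ) * a (j + 1) = 1 + (1 - β : ℝ) * ∑ k ∈ range j, c (k + 1) := by
  refine ⟨_, _, isCaratheodory_one_sub_mul_deriv hβ ha1 hf hre, fun j => ?_⟩
  have hβ' : ((1 - β : ℝ) : ℂ) ≠ 0 := Complex.ofReal_ne_zero.mpr (sub_pos.mpr hβ).ne'
  have htelescope := sum_range_sub (fun k : ℕ => ((k : ℂ) + 1) * a (k + 1)) j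
  simp only [Nat.add_eq_zero_iff, one_ne_zero, and_false, if_false, sub_zero, ← sum_div,
    mul_div_cancel₀ _ hβ']
  push_cast at htelescope ⊢
  rw [htelescope, ha1]
  ring

end Derivative

lemma one_le_mul_div_of_max_div_le {x w γ μ : ℝ} (hx : 0 < x) (hw : 0 < w) (hγ : 0 < γ)
    (hμ : max (x / (w * γ)) (x / w) ≤ μ) : 1 ≤ μ * w / x ∧ 1 ≤ μ * w / x * γ := by
  rw [max_le_iff, div_le_iff₀ (mul_pos hw hγ), div_le_iff₀ hw] at hμ
  rw [div_mul_eq_mul_div, one_le_div hx, one_le_div hx, mul_assoc]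
  exact hμ.symm

lemma norm_mul_mul_sub_le_of_norm_scaled_le {n m N : ℕ} (hn : n ≠ 0) (hm : m ≠ 0) (hN : N ≠ 0)
    {μ b₁ b₂ b₃ : ℝ} {u v w : ℂ}
    (h : ‖((μ * N / (n * m) : ℝ) : ℂ) * ((n * u) * (m * v)) - N * w‖
      ≤ μ * N / (n * m) * ((n * b₁) * (m * b₂)) - N * b₃) :
    ‖μ * u * v - w‖ ≤ μ * b₁ * b₂ - b₃ := by
  have hleft : ((μ * N / (n * m) : ℝ) : ℂ) * ((n * u) * (m * v)) - N * w
      = N * (μ * u * v - w) := by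
    push_cast
    field_simp
  have hright : μ * N / (n * m) * ((n * b₁) * (m * b₂)) - N * b₃ = N * (μ * b₁ * b₂ - b₃) := by
    field_simp
  rw [hleft, hright, norm_mul, Complex.norm_natCast] at h
  exact le_of_mul_le_mul_left h (by positivity)

theorem zalcman_F1_beta
    (β : ℝ) (hβ : β < 1) (B : ℕ → ℝ)
    (hB : ∀ n, 2 ≤ n → B n = (1 + 2 * ((n : ℝ) - 1) * (1 - β)) / n)
    (f : ℂ → ℂ) (a : ℕ → ℂ)
    (ha0 : a 0 = 0) (ha1 : a 1 = 1)
    (hf : ∀ z ∈ Metric.ball (0 : ℂ) 1, HasSum (fun k => a k * z ^ k) (f z))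
    (hre : ∀ z ∈ Metric.ball (0 : ℂ) 1, β < ((1 - z) * deriv f z).re)
    (n m : ℕ) (hn : 2 ≤ n) (hm : 2 ≤ m) (μ : ℝ)
    (hμ : max ((n : ℝ) * m / (((n : ℝ) + m - 1) * (1 - β)))
            ((n : ℝ) * m / ((n : ℝ) + m - 1)) ≤ μ) :
    ‖(μ : ℂ) * a n * a m - a (n + m - 1)‖ ≤ μ * B n * B m - B (n + m - 1) := by
  obtain ⟨p, c, hc, hac⟩ :=
    exists_isCaratheodory_coeff_eq_partialSum hβ ha1 hf fun z hz => (hre z hz).le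
  have hB' (l : ℕ) (hl : l ≠ 0) : ((l + 1 : ℕ) : ℝ) * B (l + 1) = 1 + 2 * (1 - β) * l := by
    rw [hB _ (by lia), mul_div_cancel₀ _ (by positivity)]
    push_cast
    ring
  obtain ⟨i, rfl⟩ : ∃ i, n = i + 1 + 1 := ⟨n - 2, by lia⟩
  obtain ⟨j, rfl⟩ : ∃ j, m = j + 1 + 1 := ⟨m - 2, by lia⟩
  have hN : ((i + 1 + 1 : ℕ) : ℝ) + (j + 1 + 1 : ℕ) - 1 = (i + 1 + (j + 1) + 1 : ℕ) := by
    push_cast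
    ring
  rw [hN] at hμ
  obtain ⟨hs, hsγ⟩ :=
    one_le_mul_div_of_max_div_le (by positivity) (by positivity) (sub_pos.mpr hβ) hμ
  rw [show i + 1 + 1 + (j + 1 + 1) - 1 = i + 1 + (j + 1) + 1 by lia]
  refine norm_mul_mul_sub_le_of_norm_scaled_le (n := i + 1 + 1) (m := j + 1 + 1)
    (N := i + 1 + (j + 1) + 1) (by lia) (by lia) (by lia) ?_
  rw [hac, hac, hac, hB' (i + 1) (by lia), hB' (j + 1) (by lia), hB' (i + 1 + (j + 1)) (by lia)]
  exact_mod_cast hc.norm_mul_partialSum_sub_partialSum_add_le hs hsγ i (j + 1)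
end
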